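/- Let G be a reachability game, let C be a necessary subgoal for G, and let F = {(s, s') ∈ C | REACH wins from s' in G} (the largest sufficient subgoal included in C). Then for every initial state s ∈ Init: REACH wins from s in G if and only if REACH wins from s in the pre-game G_pre = ⟨Init, Safe ∖ F, Reach ∖ F, Pre(Enf(F, G))⟩. -/

import Mathlib

universe u

/-- A reachability game over a state type `S`. States with `isReach s` are
controlled by player REACH, the others by player SAFE. -/
structure Game (S : Type u) where
  isReach : S → Prop
  Safe : S → S → Prop
  Reach : S → S → Prop
  Init : Set S
  Goal : Set S
  safe_src : ∀ s s', Safe s s' → ¬ isReach s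
  reach_src : ∀ s s', Reach s s' → isReach s

namespace Game

variable {S : Type u}

/-- The edge relation `E = Safe ∪ Reach`. -/
def E (G : Game S) (s s' : S) : Prop := G.Safe s s' ∨ G.Reach s s'

/-- A trap state has no outgoing `E`-transition. -/
def Trap (G : Game S) (s : S) : Prop := ∀ s', ¬ G.E s s'

/-- A play: an `E`-path which is infinite (`len = ⊤`) or finite
(`len = n`) and then ends in a trap state. Values of `seq` beyond a finite
length are irrelevant. -/
structure Play (G : Game S) where
  seq : ℕ → S
  len : ℕ∞
  step : ∀ i : ℕ, (i : ℕ∞) < len → G.E (seq i) (seq (i + 1))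
  fin_trap : ∀ n : ℕ, len = (n : ℕ∞) → G.Trap (seq n)

/-- REACH wins a play if some state of the play is a goal state. -/
def ReachWinsPlay (G : Game S) (p : G.Play) : Prop :=
  ∃ k : ℕ, (k : ℕ∞) ≤ p.len ∧ p.seq k ∈ G.Goal

/-- SAFE wins a play iff REACH does not. -/
def SafeWinsPlay (G : Game S) (p : G.Play) : Prop := ¬ G.ReachWinsPlay p

/-- The list `[f 0, …, f (n-1)]`. -/
def listPrefix (f : ℕ → S) (n : ℕ) : List S := (List.range n).map f

/-- A reachability strategy: on any nonempty sequence ending in a non-trap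
REACH state it chooses a `Reach`-successor. -/
def IsReachStrategy (G : Game S) (σ : List S → S) : Prop :=
  ∀ (ω : List S) (s : S), G.isReach s → ¬ G.Trap s → G.Reach s (σ (ω ++ [s]))

/-- A safety strategy: on any nonempty sequence ending in a non-trap SAFE
state it chooses a `Safe`-successor. -/
def IsSafeStrategy (G : Game S) (σ : List S → S) : Prop :=
  ∀ (ω : List S) (s : S), ¬ G.isReach s → ¬ G.Trap s → G.Safe s (σ (ω ++ [s]))

/-- Consistency of a play with a reachability strategy. -/
def ConsistentR (G : Game S) (σ : List S → S) (p : G.Play) : Prop :=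
  ∀ i : ℕ, (i : ℕ∞) < p.len → G.isReach (p.seq i) →
    p.seq (i + 1) = σ (listPrefix p.seq (i + 1))

/-- Consistency of a play with a safety strategy. -/
def ConsistentS (G : Game S) (σ : List S → S) (p : G.Play) : Prop :=
  ∀ i : ℕ, (i : ℕ∞) < p.len → ¬ G.isReach (p.seq i) →
    p.seq (i + 1) = σ (listPrefix p.seq (i + 1))

/-- `σ` is a reachability strategy winning from `s`. -/
def WinningReachStrategyFrom (G : Game S) (σ : List S → S) (s : S) : Prop :=
  G.IsReachStrategy σ ∧
    ∀ p : G.Play, p.seq 0 = s → G.ConsistentR σ p → G.ReachWinsPlay p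

/-- `σ` is a safety strategy winning from `s`. -/
def WinningSafeStrategyFrom (G : Game S) (σ : List S → S) (s : S) : Prop :=
  G.IsSafeStrategy σ ∧
    ∀ p : G.Play, p.seq 0 = s → G.ConsistentS σ p → G.SafeWinsPlay p

/-- REACH wins from `s`. -/
def ReachWinsFrom (G : Game S) (s : S) : Prop :=
  ∃ σ : List S → S, G.WinningReachStrategyFrom σ s

/-- SAFE wins from `s`. -/
def SafeWinsFrom (G : Game S) (s : S) : Prop :=
  ∃ σ : List S → S, G.WinningSafeStrategyFrom σ s

/-- Sources of a transition predicate. -/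
def Pre (T : S → S → Prop) : Set S := {s | ∃ s', T s s'}

/-- Targets of a transition predicate. -/
def Post (T : S → S → Prop) : Set S := {s' | ∃ s, T s s'}

/-- Enforceable transitions of `T` in `G`. -/
def Enf (G : Game S) (T : S → S → Prop) (s s' : S) : Prop :=
  G.E s s' ∧ T s s' ∧ ∀ s'', G.Safe s s'' → T s s''

/-- `C` is a necessary subgoal: every play of `G` (from `Init`) reaching
`Goal` at index `n` crosses `C` at some index `k < n`. -/
def NecessarySubgoal (G : Game S) (C : S → S → Prop) : Prop :=
  ∀ p : G.Play, p.seq 0 ∈ G.Init →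
    ∀ n : ℕ, (n : ℕ∞) ≤ p.len → p.seq n ∈ G.Goal →
      ∃ k < n, C (p.seq k) (p.seq (k + 1))

/-- `ρ 0 … ρ n` is a play prefix: an `E`-path avoiding `Goal` whose last
state is not a trap state. -/
def IsPlayPrefix (G : Game S) (ρ : ℕ → S) (n : ℕ) : Prop :=
  (∀ i < n, G.E (ρ i) (ρ (i + 1))) ∧ (∀ j ≤ n, ρ j ∉ G.Goal) ∧ ¬ G.Trap (ρ n)

/-- Conformance of a play prefix with a symbolic reachability strategy. -/
def PrefixConformsR (G : Game S) (𝔖 : S → S → Prop) (ρ : ℕ → S) (n : ℕ) : Prop :=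
  ∀ j < n, G.isReach (ρ j) → 𝔖 (ρ j) (ρ (j + 1))

/-- Conformance of a play prefix with a symbolic safety strategy. -/
def PrefixConformsS (G : Game S) (𝔖 : S → S → Prop) (ρ : ℕ → S) (n : ℕ) : Prop :=
  ∀ j < n, ¬ G.isReach (ρ j) → 𝔖 (ρ j) (ρ (j + 1))

/-- A play conforms to a symbolic reachability strategy if all its play
prefixes do. -/
def PlayConformsR (G : Game S) (𝔖 : S → S → Prop) (p : G.Play) : Prop :=
  ∀ n : ℕ, (n : ℕ∞) ≤ p.len → G.IsPlayPrefix p.seq n → G.PrefixConformsR 𝔖 p.seq n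

/-- A play conforms to a symbolic safety strategy if all its play
prefixes do. -/
def PlayConformsS (G : Game S) (𝔖 : S → S → Prop) (p : G.Play) : Prop :=
  ∀ n : ℕ, (n : ℕ∞) ≤ p.len → G.IsPlayPrefix p.seq n → G.PrefixConformsS 𝔖 p.seq n

/-- `𝔖` is a winning symbolic reachability strategy from `s`. -/
def WinningSymbolicReachFrom (G : Game S) (𝔖 : S → S → Prop) (s : S) : Prop :=
  (∀ a b, 𝔖 a b → G.E a b) ∧
  (∀ p : G.Play, p.seq 0 = s → G.PlayConformsR 𝔖 p → G.ReachWinsPlay p) ∧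
  (∀ (ρ : ℕ → S) (n : ℕ), ρ 0 = s → G.IsPlayPrefix ρ n → G.PrefixConformsR 𝔖 ρ n →
      G.isReach (ρ n) → ∃ s', 𝔖 (ρ n) s' ∧ G.Reach (ρ n) s')

/-- `𝔖` is a winning symbolic safety strategy from `s`. -/
def WinningSymbolicSafeFrom (G : Game S) (𝔖 : S → S → Prop) (s : S) : Prop :=
  (∀ a b, 𝔖 a b → G.E a b) ∧
  (∀ p : G.Play, p.seq 0 = s → G.PlayConformsS 𝔖 p → G.SafeWinsPlay p) ∧
  (∀ (ρ : ℕ → S) (n : ℕ), ρ 0 = s → G.IsPlayPrefix ρ n → G.PrefixConformsS 𝔖 ρ n →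
      ¬ G.isReach (ρ n) → ∃ s', 𝔖 (ρ n) s' ∧ G.Safe (ρ n) s')

/-- Bisimulations on `G`. -/
def IsBisimulation (G : Game S) (R : S → S → Prop) : Prop :=
  ∀ s1 s2, R s1 s2 →
    ((s1 ∈ G.Goal ↔ s2 ∈ G.Goal) ∧ (s1 ∈ G.Init ↔ s2 ∈ G.Init) ∧
      (G.isReach s1 ↔ G.isReach s2)) ∧
    (∀ s1', G.E s1 s1' → ∃ s2', G.E s2 s2' ∧ R s1' s2') ∧
    (∀ s2', G.E s2 s2' → ∃ s1', G.E s1 s1' ∧ R s1' s2')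

/-- The pre-game `⟨Init, Safe ∖ F, Reach ∖ F, Pre(Enf(F, G))⟩`. -/
def preGame (G : Game S) (F : S → S → Prop) : Game S where
  isReach := G.isReach
  Safe := fun a b => G.Safe a b ∧ ¬ F a b
  Reach := fun a b => G.Reach a b ∧ ¬ F a b
  Init := G.Init
  Goal := Pre (G.Enf F)
  safe_src := fun a b h => G.safe_src a b h.1
  reach_src := fun a b h => G.reach_src a b h.1

/-- The post-game: transitions restricted to sources in `φ`. -/
def postGame (G : Game S) (φ : Set S) : Game S where
  isReach := G.isReach
  Safe := fun a b => G.Safe a b ∧ a ∈ φ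
  Reach := fun a b => G.Reach a b ∧ a ∈ φ
  Init := G.Init
  Goal := G.Goal
  safe_src := fun a b h => G.safe_src a b h.1
  reach_src := fun a b h => G.reach_src a b h.1

end Game

/-!
REACH wins exactly from the attractor of the goal, so both sides of the equivalence are statements
about attractors, provable by induction. An enforceable `F`-transition moves into the attractor of
`G`, which gives one direction. For the other, follow an attractor derivation in `G` along moves
that avoid `C`: it cannot end in a goal state, since `C` is necessary, so on every branch it must
at some point be forced through `C` into a winning state, that is, enter the source of an
enforceable `F`-transition.
-/

namespace Game

variable {S : Type u} {G : Game S} {C F T : S → S → Prop} {σ τ : List S → S} {s t : S}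

section Transitions

theorem E.reach (h : G.E s t) (hs : G.isReach s) : G.Reach s t :=
  h.resolve_left fun h' => G.safe_src _ _ h' hs

theorem E.safe (h : G.E s t) (hs : ¬ G.isReach s) : G.Safe s t :=
  h.resolve_right fun h' => hs (G.reach_src _ _ h')

theorem not_trap_iff : ¬ G.Trap s ↔ ∃ t, G.E s t := by
  simp only [Trap, not_forall, not_not]

theorem preGame_E : (G.preGame F).E s t ↔ G.E s t ∧ ¬ F s t :=
  or_and_right.symm

theorem enf_of_reach (h : G.Reach s t) (hF : F s t) : G.Enf F s t :=
  ⟨.inr h, hF, fun _ h' => absurd (G.reach_src _ _ h) (G.safe_src _ _ h')⟩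

end Transitions

section Plays

theorem listPrefix_succ (f : ℕ → S) (n : ℕ) :
    listPrefix f (n + 1) = listPrefix f n ++ [f n] := by
  simp [listPrefix, List.range_succ]

theorem listPrefix_succ' (f : ℕ → S) (n : ℕ) :
    listPrefix f (n + 1) = f 0 :: listPrefix (fun i => f (i + 1)) n := by
  simp [listPrefix, List.range_succ_eq_map, Function.comp_def]

theorem listPrefix_eq_ofFn (f : ℕ → S) (n : ℕ) :
    listPrefix f n = List.ofFn fun i : Fin n => f i := by
  simp [listPrefix, List.ofFn_eq_map, ← List.map_coe_finRange_eq_range, Function.comp_def]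

theorem exists_play_seq_eq (f : ℕ → S) (hf : ∀ i, ¬ G.Trap (f i) → G.E (f i) (f (i + 1))) :
    ∃ p : G.Play, p.seq = f := by
  classical
  by_cases h : ∃ n, G.Trap (f n)
  · refine ⟨⟨f, (Nat.find h : ℕ), fun i hi => hf i (Nat.find_min h (by exact_mod_cast hi)),
      fun n hn => ?_⟩, rfl⟩
    have hn : Nat.find h = n := by exact_mod_cast hn
    exact hn ▸ Nat.find_spec h
  · exact ⟨⟨f, ⊤, fun i _ => hf i fun hi => h ⟨i, hi⟩,
      fun n hn => absurd hn.symm (ENat.natCast_ne_top n)⟩, rfl⟩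

theorem Play.len_pos (p : G.Play) (h : ¬ G.Trap (p.seq 0)) : 0 < p.len :=
  pos_iff_ne_zero.mpr fun h0 => h (p.fin_trap 0 h0)

/-- The play obtained by deleting the first state. It exists only for plays with at least one
transition, a play of length `0` having a single state. -/
def Play.tail (p : G.Play) (hp : 0 < p.len) : G.Play where
  seq i := p.seq (i + 1)
  len := p.len - 1
  step i hi := p.step (i + 1) (by exact_mod_cast lt_tsub_iff_right.mp hi)
  fin_trap n hn := p.fin_trap (n + 1) <| by
    rw [← tsub_add_cancel_of_le (Order.one_le_iff_pos.mpr hp), hn, Nat.cast_succ]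

/-- The play obtained by prepending a state. -/
def Play.cons (p : G.Play) (s : S) (h : G.E s (p.seq 0)) : G.Play where
  seq i := i.casesOn s p.seq
  len := p.len + 1
  step
    | 0, _ => h
    | i + 1, hi => p.step i (by simpa using hi)
  fin_trap
    | 0, hn => absurd hn (by simp)
    | n + 1, hn => p.fin_trap n (by simpa using hn)

end Plays

section Strategies

/-- A positional strategy following the transition predicate `T`: after a history ending in `s` it
picks some `T`-successor of `s`, and an arbitrary state if there is none. -/
noncomputable def follow [Nonempty S] (T : S → S → Prop) (l : List S) : S :=
  Classical.epsilon fun t => ∃ s ∈ l.getLast?, T s t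

theorem follow_concat [Nonempty S] (h : ∃ t, T s t) (ω : List S) :
    T s (follow T (ω ++ [s])) := by
  simpa [follow] using Classical.epsilon_spec h

theorem isReachStrategy_follow [Nonempty S] (hT : ∀ a b, T a b → G.Reach a b)
    (h : ∀ a b, G.Reach a b → ∃ c, T a c) : G.IsReachStrategy (follow T) := by
  intro ω s hs htrap
  obtain ⟨t, ht⟩ := not_trap_iff.mp htrap
  exact hT _ _ (follow_concat (h s t (ht.reach hs)) ω)

theorem isSafeStrategy_follow [Nonempty S] (hT : ∀ a b, T a b → G.Safe a b)
    (h : ∀ a b, G.Safe a b → ∃ c, T a c) : G.IsSafeStrategy (follow T) := by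
  intro ω s hs htrap
  obtain ⟨t, ht⟩ := not_trap_iff.mp htrap
  exact hT _ _ (follow_concat (h s t (ht.safe hs)) ω)

theorem exists_isReachStrategy [Nonempty S] (G : Game S) : ∃ σ, G.IsReachStrategy σ :=
  ⟨follow G.Reach, isReachStrategy_follow (fun _ _ h => h) fun _ b h => ⟨b, h⟩⟩

theorem exists_isSafeStrategy [Nonempty S] (G : Game S) : ∃ τ, G.IsSafeStrategy τ :=
  ⟨follow G.Safe, isSafeStrategy_follow (fun _ _ h => h) fun _ b h => ⟨b, h⟩⟩

/-- The sequence of states generated from `s` when every next state is chosen by `σ` from the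
history so far. -/
def outcome (σ : List S → S) (s : S) : ℕ → S
  | 0 => s
  | n + 1 => σ (List.ofFn fun i : Fin (n + 1) => outcome σ s i)

theorem outcome_zero (σ : List S → S) (s : S) : outcome σ s 0 = s := by
  rw [outcome]

theorem outcome_succ (σ : List S → S) (s : S) (n : ℕ) :
    outcome σ s (n + 1) = σ (listPrefix (outcome σ s) (n + 1)) := by
  rw [outcome, listPrefix_eq_ofFn]

open Classical in
theorem exists_play_consistent (hσ : G.IsReachStrategy σ) (hτ : G.IsSafeStrategy τ) (s : S) :
    ∃ p : G.Play, p.seq 0 = s ∧ G.ConsistentR σ p ∧ G.ConsistentS τ p := by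
  let f := outcome (fun l => if ∃ r ∈ l.getLast?, G.isReach r then σ l else τ l) s
  have hf (i : ℕ) : f (i + 1) =
      if G.isReach (f i) then σ (listPrefix f (i + 1)) else τ (listPrefix f (i + 1)) := by
    refine (outcome_succ _ s i).trans ?_
    simp [listPrefix_succ, f]
  obtain ⟨p, hp⟩ := G.exists_play_seq_eq f fun i hi => by
    rw [hf, listPrefix_succ]
    split_ifs with hr
    · exact .inr (hσ _ _ hr hi)
    · exact .inl (hτ _ _ hr hi)
  refine ⟨p, by rw [hp]; exact outcome_zero _ s, fun i _ hi => ?_, fun i _ hi => ?_⟩ <;>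
    rw [hp] at hi ⊢ <;> simp [hf, hi]

theorem exists_play_from (G : Game S) (s : S) : ∃ p : G.Play, p.seq 0 = s := by
  have : Nonempty S := ⟨s⟩
  obtain ⟨σ, hσ⟩ := G.exists_isReachStrategy
  obtain ⟨τ, hτ⟩ := G.exists_isSafeStrategy
  obtain ⟨p, hp, -⟩ := exists_play_consistent hσ hτ s
  exact ⟨p, hp⟩

theorem ReachWinsFrom.not_safeWinsFrom (h : G.ReachWinsFrom s) : ¬ G.SafeWinsFrom s := by
  rintro ⟨τ, hτ, hτ_wins⟩
  obtain ⟨σ, hσ, hσ_wins⟩ := h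
  obtain ⟨p, hp, hpσ, hpτ⟩ := exists_play_consistent hσ hτ s
  exact hτ_wins p hp hpτ (hσ_wins p hp hpσ)

theorem reachWinsFrom_of_mem_goal (h : s ∈ G.Goal) : G.ReachWinsFrom s := by
  have : Nonempty S := ⟨s⟩
  obtain ⟨σ, hσ⟩ := G.exists_isReachStrategy
  exact ⟨σ, hσ, fun p hp _ => ⟨0, zero_le, hp ▸ h⟩⟩

/-- The strategy that makes its first move by `σ` and, once the second state `u` of the play is
known, continues with `τ u`, forgetting the first state. -/
def switchAfterFirst (σ : List S → S) (τ : S → List S → S) : List S → S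
  | _ :: u :: l => τ u (u :: l)
  | l => σ l

theorem IsReachStrategy.switchAfterFirst (hσ : G.IsReachStrategy σ) {τ : S → List S → S}
    (hτ : ∀ u, G.IsReachStrategy (τ u)) : G.IsReachStrategy (switchAfterFirst σ τ)
  | [] => hσ []
  | [_] => fun s => hτ s [] s
  | _ :: u :: l => hτ u (u :: l)

theorem exists_uniform_reachStrategy [Nonempty S] (G : Game S) :
    ∃ τ : S → List S → S, (∀ u, G.IsReachStrategy (τ u)) ∧
      ∀ u, G.ReachWinsFrom u → G.WinningReachStrategyFrom (τ u) u := by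
  obtain ⟨σ, hσ⟩ := G.exists_isReachStrategy
  have h (u : S) : ∃ τ, G.IsReachStrategy τ ∧
      (G.ReachWinsFrom u → G.WinningReachStrategyFrom τ u) := by
    by_cases hu : G.ReachWinsFrom u
    · exact hu.imp fun τ hτ => ⟨hτ.1, fun _ => hτ⟩
    · exact ⟨σ, hσ, fun hu' => absurd hu' hu⟩
  choose τ hτ hτ_wins using h
  exact ⟨τ, hτ, hτ_wins⟩

theorem ReachWinsPlay.of_tail {p : G.Play} {hp : 0 < p.len} (h : G.ReachWinsPlay (p.tail hp)) :
    G.ReachWinsPlay p := by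
  obtain ⟨k, hk, hgoal⟩ := h
  refine ⟨k + 1, ?_, hgoal⟩
  exact_mod_cast add_le_of_le_tsub_right_of_le (Order.one_le_iff_pos.mpr hp) hk

theorem ConsistentR.tail {τ : S → List S → S} {p : G.Play}
    (h : G.ConsistentR (switchAfterFirst σ τ) p) (hp : 0 < p.len) :
    G.ConsistentR (τ (p.seq 1)) (p.tail hp) := by
  intro i hi hr
  have hlt : ((i + 1 : ℕ) : ℕ∞) < p.len := by exact_mod_cast lt_tsub_iff_right.mp hi
  refine (h (i + 1) hlt hr).trans ?_
  rw [listPrefix_succ', listPrefix_succ']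
  exact congrArg (τ (p.seq 1)) (listPrefix_succ' (p.tail hp).seq i).symm

theorem reachWinsFrom_of_forall_successor (hσ : G.IsReachStrategy σ) (hs : ¬ G.Trap s)
    (h : ∀ t, G.E s t → (G.isReach s → t = σ [s]) → G.ReachWinsFrom t) :
    G.ReachWinsFrom s := by
  have : Nonempty S := ⟨s⟩
  obtain ⟨τ, hτ, hτ_wins⟩ := G.exists_uniform_reachStrategy
  refine ⟨switchAfterFirst σ τ, hσ.switchAfterFirst hτ, ?_⟩
  rintro p rfl hp
  have hlen : 0 < p.len := p.len_pos hs
  have hwins : G.ReachWinsFrom (p.seq 1) := h _ (p.step 0 hlen) (hp 0 hlen)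
  exact .of_tail ((hτ_wins _ hwins).2 (p.tail hlen) rfl (hp.tail hlen))

theorem ReachWinsFrom.of_reach (hst : G.Reach s t) (ht : G.ReachWinsFrom t) :
    G.ReachWinsFrom s := by
  have : Nonempty S := ⟨s⟩
  let T (a b : S) : Prop := G.Reach a b ∧ (a = s → b = t)
  have hT (a b : S) (hab : G.Reach a b) : ∃ c, T a c := by
    by_cases ha : a = s
    · exact ⟨t, ha ▸ hst, fun _ => rfl⟩
    · exact ⟨b, hab, fun ha' => absurd ha' ha⟩
  have hmove : follow T [s] = t := (follow_concat (hT s t hst) []).2 rfl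
  refine reachWinsFrom_of_forall_successor (isReachStrategy_follow (fun _ _ h => h.1) hT)
    (not_trap_iff.mpr ⟨t, .inr hst⟩) fun u _ hu => ?_
  rwa [hu (G.reach_src _ _ hst), hmove]

theorem ReachWinsFrom.of_safe (hst : G.Safe s t) (h : ∀ u, G.Safe s u → G.ReachWinsFrom u) :
    G.ReachWinsFrom s := by
  have : Nonempty S := ⟨s⟩
  obtain ⟨σ, hσ⟩ := G.exists_isReachStrategy
  exact reachWinsFrom_of_forall_successor hσ (not_trap_iff.mpr ⟨t, .inl hst⟩)
    fun u hu _ => h u (hu.safe (G.safe_src _ _ hst))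

end Strategies

section Attractor

/-- The attractor of the goal: the least set of states containing the goal, every state with a
REACH-transition into the set, and every state that has SAFE-transitions, all of them into the set.
Trap states outside the goal must be left out, since a play ending there is lost for REACH. -/
inductive Attractor (G : Game S) : S → Prop
  | goal {s : S} : s ∈ G.Goal → Attractor G s
  | reach {s t : S} : G.Reach s t → Attractor G t → Attractor G s
  | safe {s t : S} : G.Safe s t → (∀ u, G.Safe s u → Attractor G u) → Attractor G s

theorem Attractor.reachWinsFrom (h : G.Attractor s) : G.ReachWinsFrom s := by
  induction h with
  | goal hs => exact reachWinsFrom_of_mem_goal hs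
  | reach hst _ ih => exact .of_reach hst ih
  | safe hst _ ih => exact .of_safe hst ih

theorem exists_safe_not_attractor (h : G.Safe s t) :
    ∃ u, G.Safe s u ∧ (¬ G.Attractor s → ¬ G.Attractor u) := by
  by_cases hs : G.Attractor s
  · exact ⟨t, h, fun hs' => absurd hs hs'⟩
  · obtain ⟨u, hsu, hu⟩ : ∃ u, G.Safe s u ∧ ¬ G.Attractor u := by
      by_contra! hall
      exact hs (.safe h hall)
    exact ⟨u, hsu, fun _ => hu⟩

theorem safeWinsFrom_of_not_attractor (hs : ¬ G.Attractor s) : G.SafeWinsFrom s := by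
  have : Nonempty S := ⟨s⟩
  let T (a b : S) : Prop := G.Safe a b ∧ (¬ G.Attractor a → ¬ G.Attractor b)
  refine ⟨follow T, isSafeStrategy_follow (fun _ _ h => h.1)
    fun _ _ => exists_safe_not_attractor, ?_⟩
  rintro p rfl hp ⟨k, hk, hgoal⟩
  have hstep (i : ℕ) (hi : (i : ℕ∞) < p.len) (hpi : ¬ G.Attractor (p.seq i)) :
      ¬ G.Attractor (p.seq (i + 1)) := by
    by_cases hr : G.isReach (p.seq i)
    · exact fun h => hpi (.reach ((p.step i hi).reach hr) h)
    · rw [hp i hi hr, listPrefix_succ]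
      have hsafe := (p.step i hi).safe hr
      exact (follow_concat (T := T) (exists_safe_not_attractor hsafe) _).2 hpi
  have havoid (i : ℕ) (hi : (i : ℕ∞) ≤ p.len) : ¬ G.Attractor (p.seq i) := by
    induction i with
    | zero => exact hs
    | succ i ih =>
      have hlt : (i : ℕ∞) < p.len := lt_of_lt_of_le (by exact_mod_cast i.lt_succ_self) hi
      exact hstep i hlt (ih hlt.le)
  exact havoid k hk (.goal hgoal)

theorem reachWinsFrom_iff_attractor : G.ReachWinsFrom s ↔ G.Attractor s :=
  ⟨fun h => by_contra fun hs => h.not_safeWinsFrom (safeWinsFrom_of_not_attractor hs),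
    Attractor.reachWinsFrom⟩

end Attractor

section Subgoals

open Relation

theorem exists_play_of_reflTransGen (hT : ∀ a b, T a b → G.E a b) (h : ReflTransGen T s t) :
    ∃ (p : G.Play) (n : ℕ), p.seq 0 = s ∧ (n : ℕ∞) ≤ p.len ∧ p.seq n = t ∧
      ∀ i < n, T (p.seq i) (p.seq (i + 1)) := by
  induction h using ReflTransGen.head_induction_on with
  | refl =>
    obtain ⟨p, hp⟩ := G.exists_play_from t
    exact ⟨p, 0, hp, zero_le, hp, by simp⟩
  | @head s u hsu _ ih =>
    obtain ⟨p, n, rfl, hn, hpn, hp⟩ := ih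
    refine ⟨p.cons s (hT _ _ hsu), n + 1, rfl, ?_, hpn, ?_⟩
    · exact_mod_cast add_le_add_left hn 1
    · rintro (_ | i) hi
      · exact hsu
      · exact hp i (Nat.lt_of_succ_lt_succ hi)

theorem NecessarySubgoal.notMem_goal (hC : G.NecessarySubgoal C) (hs : s ∈ G.Init)
    (h : ReflTransGen (G.preGame C).E s t) : t ∉ G.Goal := by
  intro ht
  obtain ⟨p, n, rfl, hn, rfl, hp⟩ :=
    exists_play_of_reflTransGen (fun _ _ h => (preGame_E.mp h).1) h
  obtain ⟨k, hk, hCk⟩ := hC p hs n hn ht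
  exact (preGame_E.mp (hp k hk)).2 hCk

theorem Attractor.of_preGame (hF : ∀ a b, F a b → G.Attractor b)
    (h : (G.preGame F).Attractor s) : G.Attractor s := by
  induction h with
  | goal hs =>
    obtain ⟨u, hE | hE, hFu, hall⟩ := hs
    · exact .safe hE fun v hv => hF _ _ (hall v hv)
    · exact .reach hE (hF _ _ hFu)
  | reach hst _ ih => exact .reach hst.1 ih
  | @safe s _ hst _ ih =>
    refine .safe hst.1 fun u hu => ?_
    by_cases hFu : F s u
    · exact hF s u hFu
    · exact ih u ⟨hu, hFu⟩

theorem Attractor.preGame (hF : ∀ a b, C a b → G.Attractor b → F a b)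
    (hgoal : ∀ t, ReflTransGen (G.preGame C).E s t → t ∉ G.Goal) (h : G.Attractor s) :
    (G.preGame F).Attractor s := by
  induction h with
  | @goal s hs => exact absurd hs (hgoal s .refl)
  | @reach s t hst ht ih =>
    by_cases hFt : F s t
    · exact .goal ⟨t, enf_of_reach hst hFt⟩
    · have hCt : ¬ C s t := fun hCt => hFt (hF s t hCt ht)
      exact .reach ⟨hst, hFt⟩ (ih fun v hv => hgoal v (hv.head (.inr ⟨hst, hCt⟩)))
  | @safe s t hst hall ih =>
    by_cases hforced : ∀ u, G.Safe s u → F s u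
    · exact .goal ⟨t, .inl hst, hforced t hst, hforced⟩
    · push Not at hforced
      obtain ⟨u, hsu, hFu⟩ := hforced
      refine .safe ⟨hsu, hFu⟩ fun v ⟨hsv, hFv⟩ => ih v hsv fun w hw => ?_
      have hCv : ¬ C s v := fun hCv => hFv (hF s v hCv (hall v hsv))
      exact hgoal w (hw.head (.inl ⟨hsv, hCv⟩))

end Subgoals

end Game

/-- slicing along the largest sufficient subgoal `F` contained
in a necessary subgoal `C`: REACH wins from an initial state in `G` iff REACH
wins from it in the pre-game. -/
theorem reach_wins_iff_wins_preGame {S : Type u} (G : Game S)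
    (C : S → S → Prop) (hC : G.NecessarySubgoal C) :
    ∀ s ∈ G.Init,
      (G.ReachWinsFrom s ↔
        (G.preGame (fun a b => C a b ∧ G.ReachWinsFrom b)).ReachWinsFrom s) := by
  intro s hs
  simp only [Game.reachWinsFrom_iff_attractor]
  exact ⟨.preGame (fun _ _ hab hb => ⟨hab, hb⟩) fun _ => hC.notMem_goal hs,
    .of_preGame fun _ _ h => h.2⟩
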